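/- Let Λ ⊗ Γ be a g-fusion frame for H ⊗ K with frame operator S_{Λ⊗Γ} = S_Λ ⊗ S_Γ. Then the g-fusion frame operator of the canonical dual g-fusion frame Θ = {(S_{Λ⊗Γ}^{-1}(V_i ⊗ W_j), (Λ_i ⊗ Γ_j) P_{V_i ⊗ W_j} S_{Λ⊗Γ}^{-1}, v_i w_j)} equals S_{Λ⊗Γ}^{-1}; that is, Σ_{i,j} v_i² w_j² P_{S^{-1}(V_i⊗W_j)} Δ_{ij}* Δ_{ij} P_{S^{-1}(V_i⊗W_j)} (f ⊗ g) = S_{Λ⊗Γ}^{-1}(f ⊗ g), where Δ_{ij} = (Λ_i ⊗ Γ_j) P_{V_i ⊗ W_j} S_{Λ⊗Γ}^{-1}. -/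

import Mathlib

noncomputable section

open Submodule ContinuousLinearMap

local notation "⟪" x ", " y "⟫" => @inner ℂ _ _ x y

/-- An abstract realization of the Hilbert-space tensor product of `H` and `K`:
a map `tmul : H → K → E` whose inner products multiply and whose elementary
tensors have dense span. -/
structure HilbertTensor (H K E : Type*) [NormedAddCommGroup H] [InnerProductSpace ℂ H]
    [NormedAddCommGroup K] [InnerProductSpace ℂ K]
    [NormedAddCommGroup E] [InnerProductSpace ℂ E] where
  tmul : H → K → E
  inner_tmul : ∀ (f f' : H) (g g' : K),
    ⟪tmul f g, tmul f' g'⟫ = ⟪f, f'⟫ * ⟪g, g'⟫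
  dense_span : Dense (Submodule.span ℂ (Set.range fun p : H × K => tmul p.1 p.2) : Set E)

variable {H K E H' K' E' : Type*}
variable [NormedAddCommGroup H] [InnerProductSpace ℂ H]
variable [NormedAddCommGroup K] [InnerProductSpace ℂ K]
variable [NormedAddCommGroup E] [InnerProductSpace ℂ E]
variable [NormedAddCommGroup H'] [InnerProductSpace ℂ H']
variable [NormedAddCommGroup K'] [InnerProductSpace ℂ K']
variable [NormedAddCommGroup E'] [InnerProductSpace ℂ E']

/-- The orthogonal projection onto a (closed) subspace, as an operator `H →L[ℂ] H`. -/
def projL (V : Submodule ℂ H) [HasOrthogonalProjection V] : H →L[ℂ] H :=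
  V.subtypeL.comp (orthogonalProjection V)

/-- `R` is the tensor product operator `Q ⊗ T`, i.e. it is determined on elementary
tensors by `(Q ⊗ T)(f ⊗ g) = Qf ⊗ Tg`. -/
def IsTensorOp (tp : HilbertTensor H K E) (tp' : HilbertTensor H' K' E')
    (Q : H →L[ℂ] H') (T : K →L[ℂ] K') (R : E →L[ℂ] E') : Prop :=
  ∀ (f : H) (g : K), R (tp.tmul f g) = tp'.tmul (Q f) (T g)

/-- The tensor product `V ⊗ W` of subspaces: the closure of the span of elementary
tensors of elements of `V` and `W`. -/
def tsub (tp : HilbertTensor H K E) (V : Submodule ℂ H) (W : Submodule ℂ K) : Submodule ℂ E :=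
  (Submodule.span ℂ {x : E | ∃ f ∈ V, ∃ g ∈ W, x = tp.tmul f g}).topologicalClosure

/-- `{(V i, Λ i, v i)}` is a g-fusion Bessel sequence in `H` with bound `B`. -/
def IsGFusionBessel {ι : Type*} {Hi : ι → Type*}
    [∀ i, NormedAddCommGroup (Hi i)] [∀ i, InnerProductSpace ℂ (Hi i)]
    (V : ι → Submodule ℂ H) [∀ i, HasOrthogonalProjection (V i)]
    (Λ : ∀ i, H →L[ℂ] Hi i) (v : ι → ℝ) (B : ℝ) : Prop :=
  (∀ i, 0 < v i) ∧ 0 < B ∧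
    ∀ f : H, ∑' i, (v i) ^ 2 * ‖Λ i (projL (V i) f)‖ ^ 2 ≤ B * ‖f‖ ^ 2

/-- `{(V i, Λ i, v i)}` is a g-fusion frame for `H` with bounds `A ≤ B`. -/
def IsGFusionFrame {ι : Type*} {Hi : ι → Type*}
    [∀ i, NormedAddCommGroup (Hi i)] [∀ i, InnerProductSpace ℂ (Hi i)]
    (V : ι → Submodule ℂ H) [∀ i, HasOrthogonalProjection (V i)]
    (Λ : ∀ i, H →L[ℂ] Hi i) (v : ι → ℝ) (A B : ℝ) : Prop :=
  (∀ i, 0 < v i) ∧ 0 < A ∧ A ≤ B ∧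
    ∀ f : H, A * ‖f‖ ^ 2 ≤ ∑' i, (v i) ^ 2 * ‖Λ i (projL (V i) f)‖ ^ 2 ∧
      ∑' i, (v i) ^ 2 * ‖Λ i (projL (V i) f)‖ ^ 2 ≤ B * ‖f‖ ^ 2

lemma aux_conj {P : Type*} {u : P → ℂ} {s : ℂ} (h : HasSum u s) :
    HasSum (fun p => (starRingEnd ℂ) (u p)) ((starRingEnd ℂ) s) := h.star

lemma aux_inner_hasSum {P : Type*} {u : P → E} {s : E} (h : HasSum u s) (y : E) :
    HasSum (fun p => ⟪u p, y⟫) ⟪s, y⟫ := by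
  have := aux_conj ((innerSL ℂ y).hasSum h)
  simpa [Function.comp_def] using this

/-- A Bessel family has a strongly summable frame operator. -/
lemma aux_summable {P : Type*} [CompleteSpace E] {Ep : P → Type*}
    [∀ p, NormedAddCommGroup (Ep p)] [∀ p, InnerProductSpace ℂ (Ep p)]
    [∀ p, CompleteSpace (Ep p)] (N : ∀ p, E →L[ℂ] Ep p) (C : ℝ)
    (hB : ∀ (F : Finset P) (x : E), ∑ p ∈ F, ‖N p x‖ ^ 2 ≤ C * ‖x‖ ^ 2) (x : E) :
    Summable (fun p => ContinuousLinearMap.adjoint (N p) (N p x)) := by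
  have hs : Summable (fun p => ‖N p x‖ ^ 2) :=
    summable_of_sum_le (fun p => by positivity) (fun F => hB F x)
  rw [summable_iff_vanishing_norm] at hs ⊢
  intro ε hε
  have hC' : 0 < |C| + 1 := by positivity
  obtain ⟨s, hs⟩ := hs (ε ^ 2 / (|C| + 1)) (by positivity)
  refine ⟨s, fun t ht => ?_⟩
  have h1 := hs t ht
  set y := ∑ p ∈ t, ContinuousLinearMap.adjoint (N p) (N p x) with hy
  have ha0 : 0 ≤ ∑ p ∈ t, ‖N p x‖ ^ 2 := Finset.sum_nonneg fun p _ => by positivity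
  rw [Real.norm_of_nonneg ha0] at h1
  have h2 : ‖y‖ ^ 2 ≤ ∑ p ∈ t, ‖N p x‖ * ‖N p y‖ := by
    have : (‖y‖ ^ 2 : ℝ) = RCLike.re ⟪y, y⟫ := by
      rw [inner_self_eq_norm_sq (𝕜 := ℂ)]
    rw [this]
    conv_lhs => rw [hy, sum_inner, map_sum]
    refine Finset.sum_le_sum fun p _ => ?_
    rw [ContinuousLinearMap.adjoint_inner_left]
    exact re_inner_le_norm _ _
  have h3 := Finset.sum_mul_sq_le_sq_mul_sq t (fun p => ‖N p x‖) (fun p => ‖N p y‖)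
  have h4 := hB t y
  set a := ∑ p ∈ t, ‖N p x‖ ^ 2
  have h5 : (‖y‖ ^ 2) ^ 2 ≤ a * ((|C| + 1) * ‖y‖ ^ 2) := by
    calc (‖y‖ ^ 2) ^ 2 ≤ (∑ p ∈ t, ‖N p x‖ * ‖N p y‖) ^ 2 := by gcongr
      _ ≤ a * ∑ p ∈ t, ‖N p y‖ ^ 2 := h3
      _ ≤ a * ((|C| + 1) * ‖y‖ ^ 2) := by
        gcongr
        refine h4.trans ?_
        gcongr
        linarith [le_abs_self C]
  rw [lt_div_iff₀ hC'] at h1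
  by_contra hlt
  push Not at hlt
  have hy0 : 0 < ‖y‖ ^ 2 := by have : 0 < ‖y‖ := hε.trans_le hlt
                               positivity
  have h6 : ‖y‖ ^ 2 ≤ a * (|C| + 1) := by
    refine le_of_mul_le_mul_right ?_ hy0
    nlinarith
  have h7 : ε ^ 2 ≤ ‖y‖ ^ 2 := by gcongr
  linarith

lemma aux_gram_quad {n : Type*} [Fintype n] (f : n → E) (c : n → ℂ) :
    star c ⬝ᵥ (Matrix.gram ℂ f).mulVec c = ((‖∑ k, c k • f k‖ ^ 2 : ℝ) : ℂ) := by
  rw [Matrix.star_dotProduct_gram_mulVec, inner_self_eq_norm_sq_to_K]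
  norm_cast

open scoped ComplexOrder in
lemma aux_gram_sub {n ι : Type*} [Fintype n] {Hi : ι → Type*}
    [∀ i, NormedAddCommGroup (Hi i)] [∀ i, InnerProductSpace ℂ (Hi i)]
    (L : ∀ i, H →L[ℂ] Hi i) (B : ℝ) (F : Finset ι)
    (hB : ∀ (x : H), ∑ p ∈ F, ‖L p x‖ ^ 2 ≤ B * ‖x‖ ^ 2) (f : n → H) :
    ((B : ℂ) • Matrix.gram ℂ f - ∑ i ∈ F, Matrix.gram ℂ (fun k => L i (f k))).PosSemidef := by
  refine Matrix.PosSemidef.of_dotProduct_mulVec_nonneg ?_ ?_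
  · refine Matrix.IsHermitian.sub ?_ ?_
    · unfold Matrix.IsHermitian
      rw [Matrix.conjTranspose_smul, (Matrix.isHermitian_gram ℂ f).eq]
      simp
    · exact (Matrix.posSemidef_sum F fun i _ => Matrix.posSemidef_gram ℂ _).1
  · intro c
    have h := hB (∑ k, c k • f k)
    rw [Matrix.sub_mulVec, dotProduct_sub, Matrix.smul_mulVec, dotProduct_smul, aux_gram_quad,
      Matrix.sum_mulVec, dotProduct_sum]
    simp only [aux_gram_quad]
    simp only [map_sum, map_smul] at h
    rw [sub_nonneg, smul_eq_mul]
    exact_mod_cast h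

open scoped Matrix ComplexOrder in
lemma aux_tensor_bessel {ι κ : Type*} {Hi : ι → Type*} {Kj : κ → Type*} {Ep : ι × κ → Type*}
    [∀ i, NormedAddCommGroup (Hi i)] [∀ i, InnerProductSpace ℂ (Hi i)]
    [∀ j, NormedAddCommGroup (Kj j)] [∀ j, InnerProductSpace ℂ (Kj j)]
    [∀ p, NormedAddCommGroup (Ep p)] [∀ p, InnerProductSpace ℂ (Ep p)]
    (tp : HilbertTensor H K E)
    (L : ∀ i, H →L[ℂ] Hi i) (M : ∀ j, K →L[ℂ] Kj j) (N : ∀ p, E →L[ℂ] Ep p) (B D : ℝ)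
    (hB0 : 0 ≤ B) 
    (hL : ∀ (F : Finset ι) (x : H), ∑ p ∈ F, ‖L p x‖ ^ 2 ≤ B * ‖x‖ ^ 2)
    (hM : ∀ (F : Finset κ) (x : K), ∑ p ∈ F, ‖M p x‖ ^ 2 ≤ D * ‖x‖ ^ 2)
    (hN : ∀ p f g f' g', ⟪N p (tp.tmul f g), N p (tp.tmul f' g')⟫ =
      ⟪L p.1 f, L p.1 f'⟫ * ⟪M p.2 g, M p.2 g'⟫)
    (F : Finset (ι × κ)) (x : E) : ∑ p ∈ F, ‖N p x‖ ^ 2 ≤ B * D * ‖x‖ ^ 2 := by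
  classical
  have hcl : IsClosed {x : E | ∑ p ∈ F, ‖N p x‖ ^ 2 ≤ B * D * ‖x‖ ^ 2} :=
    isClosed_le (by fun_prop) (by fun_prop)
  refine hcl.closure_subset_iff.2 ?_ (tp.dense_span x)
  intro x hx
  obtain ⟨n, c, t, rfl⟩ := Submodule.mem_span_set'.1 hx
  choose q hq using fun k => (t k).2
  simp only at hq
  let f : Fin n → H := fun k => (q k).1
  let g : Fin n → K := fun k => (q k).2
  have ht : ∀ k, (t k : E) = tp.tmul (f k) (g k) := fun k => (hq k).symm
  simp only [ht]
  let F1 := F.image Prod.fst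
  let F2 := F.image Prod.snd
  have hF : F ⊆ F1 ×ˢ F2 := Finset.subset_product
  set A := ∑ i ∈ F1, Matrix.gram ℂ (fun k => L i (f k)) with hA
  set A' := ∑ i ∈ F2, Matrix.gram ℂ (fun k => M i (g k)) with hA'
  have p1 := aux_gram_sub L B F1 (hL F1) f
  have p2 := aux_gram_sub M D F2 (hM F2) g
  have p3 : A.PosSemidef := Matrix.posSemidef_sum F1 fun i _ => Matrix.posSemidef_gram ℂ _
  have p4 : ((B : ℂ) • Matrix.gram ℂ f).PosSemidef :=
    (Matrix.posSemidef_gram ℂ f).smul (by exact_mod_cast hB0)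
  have p5 := (p4.hadamard p2).add (p1.hadamard (Matrix.posSemidef_sum F2 fun i _ => Matrix.posSemidef_gram ℂ (fun k => M i (g k))))
  have e : ((B : ℂ) • Matrix.gram ℂ f) ⊙ ((D : ℂ) • Matrix.gram ℂ g - A') +
      ((B : ℂ) • Matrix.gram ℂ f - A) ⊙ A' =
      ((B * D : ℝ) : ℂ) • Matrix.gram ℂ (fun k => tp.tmul (f k) (g k)) -
      ∑ p ∈ F1 ×ˢ F2, Matrix.gram ℂ (fun k => N p (tp.tmul (f k) (g k))) := by
    ext k l
    simp only [Matrix.add_apply, Matrix.hadamard_apply, Matrix.sub_apply, Matrix.smul_apply,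
      Matrix.gram_apply, Matrix.sum_apply, tp.inner_tmul, hN, hA, hA', smul_eq_mul,
      Finset.sum_product]
    have hms := Finset.sum_mul_sum F1 F2 (fun i => ⟪L i (f k), L i (f l)⟫)
      (fun j => ⟪M j (g k), M j (g l)⟫)
    refine Eq.trans ?_ (congrArg (fun z => ((B * D : ℝ) : ℂ) *
      (⟪f k, f l⟫ * ⟪g k, g l⟫) - z) hms)
    push_cast
    ring
  rw [e] at p5
  have h := p5.dotProduct_mulVec_nonneg c
  rw [Matrix.sub_mulVec, dotProduct_sub, Matrix.smul_mulVec, dotProduct_smul, aux_gram_quad,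
      Matrix.sum_mulVec, dotProduct_sum] at h
  simp only [aux_gram_quad] at h
  rw [sub_nonneg, smul_eq_mul] at h
  have h' : ∑ p ∈ F1 ×ˢ F2, ‖∑ k, c k • N p (tp.tmul (f k) (g k))‖ ^ 2 ≤
    B * D * ‖∑ k, c k • tp.tmul (f k) (g k)‖ ^ 2 := by exact_mod_cast h
  simp only [Set.mem_ofPred_eq, map_sum, map_smul]
  exact (Finset.sum_le_sum_of_subset_of_nonneg hF fun _ _ _ => by positivity).trans h'

lemma aux_ext_tensor (tp : HilbertTensor H K E) {x y : E}
    (h : ∀ f g, ⟪x, tp.tmul f g⟫ = ⟪y, tp.tmul f g⟫) : x = y := by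
  have : innerSL ℂ x = innerSL ℂ y := by
    refine ContinuousLinearMap.ext_on tp.dense_span ?_
    rintro _ ⟨p, rfl⟩
    exact h _ _
  exact ext_inner_right ℂ fun v => by simpa using DFunLike.congr_fun this v

lemma aux_proj_tensor (tp : HilbertTensor H K E) (V : Submodule ℂ H) (W : Submodule ℂ K)
    [HasOrthogonalProjection V] [HasOrthogonalProjection W]
    [HasOrthogonalProjection (tsub tp V W)] (f : H) (g : K) :
    projL (tsub tp V W) (tp.tmul f g) = tp.tmul (projL V f) (projL W g) := by
  change (tsub tp V W).starProjection _ = tp.tmul (V.starProjection f) (W.starProjection g)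
  refine (Submodule.eq_starProjection_of_mem_of_inner_eq_zero ?_ ?_)
  · exact Submodule.le_topologicalClosure _ (Submodule.subset_span
      ⟨_, Submodule.starProjection_apply_mem _ _, _, Submodule.starProjection_apply_mem _ _, rfl⟩)
  · intro z hz
    have : tsub tp V W ≤ (ℂ ∙ (tp.tmul f g - tp.tmul (V.starProjection f) (W.starProjection g)))ᗮ := by
      refine Submodule.topologicalClosure_minimal _ ?_ (Submodule.isClosed_orthogonal _)
      rw [Submodule.span_le]
      rintro _ ⟨a, ha, b, hb, rfl⟩
      rw [SetLike.mem_coe, Submodule.mem_orthogonal_singleton_iff_inner_right, inner_sub_left,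
        tp.inner_tmul, tp.inner_tmul, Submodule.inner_starProjection_left_eq_right,
        Submodule.inner_starProjection_left_eq_right, Submodule.starProjection_eq_self_iff.2 ha,
        Submodule.starProjection_eq_self_iff.2 hb, sub_self]
    exact Submodule.mem_orthogonal_singleton_iff_inner_right.1 (this hz)

lemma aux_proj_inner (V : Submodule ℂ H) [HasOrthogonalProjection V] (x y : H) :
    ⟪projL V x, y⟫ = ⟪x, projL V y⟫ := Submodule.inner_starProjection_left_eq_right V x y

lemma aux_frame_bessel {ι : Type*} {Hi : ι → Type*}
    [∀ i, NormedAddCommGroup (Hi i)] [∀ i, InnerProductSpace ℂ (Hi i)]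
    (V : ι → Submodule ℂ H) [∀ i, HasOrthogonalProjection (V i)]
    (Λ : ∀ i, H →L[ℂ] Hi i) (v : ι → ℝ) (A B : ℝ) (h : IsGFusionFrame V Λ v A B)
    (F : Finset ι) (x : H) :
    ∑ i ∈ F, ‖((v i : ℂ) • (Λ i).comp (projL (V i))) x‖ ^ 2 ≤ B * ‖x‖ ^ 2 := by
  obtain ⟨h1, h2, h3, h4⟩ := h
  have e : ∀ i, ‖((v i : ℂ) • (Λ i).comp (projL (V i))) x‖ ^ 2 =
      (v i) ^ 2 * ‖Λ i (projL (V i) x)‖ ^ 2 := fun i => by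
    simp [norm_smul, mul_pow]
  simp only [e]
  by_cases hx : x = 0
  · simp [hx]
  · have hs : Summable fun i => (v i) ^ 2 * ‖Λ i (projL (V i) x)‖ ^ 2 := by
      by_contra hns
      have := (h4 x).1
      rw [tsum_eq_zero_of_not_summable hns] at this
      have hx' : 0 < ‖x‖ := norm_pos_iff.2 hx
      have : 0 < A * ‖x‖ ^ 2 := by positivity
      linarith
    exact (hs.sum_le_tsum F fun i _ => by positivity).trans (h4 x).2

lemma aux_op_hasSum {ι : Type*} {Hi : ι → Type*} [CompleteSpace H]
    [∀ i, NormedAddCommGroup (Hi i)] [∀ i, InnerProductSpace ℂ (Hi i)] [∀ i, CompleteSpace (Hi i)]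
    (V : ι → Submodule ℂ H) [∀ i, HasOrthogonalProjection (V i)]
    (Λ : ∀ i, H →L[ℂ] Hi i) (v : ι → ℝ) (A B : ℝ) (h : IsGFusionFrame V Λ v A B)
    (S : H →L[ℂ] H) (hS : ∀ f : H, S f = ∑' i, ((v i) ^ 2 : ℝ) •
      projL (V i) (ContinuousLinearMap.adjoint (Λ i) (Λ i (projL (V i) f)))) (f f' : H) :
    HasSum (fun i => ⟪((v i : ℂ) • (Λ i).comp (projL (V i))) f,
      ((v i : ℂ) • (Λ i).comp (projL (V i))) f'⟫) ⟪S f, f'⟫ := by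
  have hs := aux_summable _ B (aux_frame_bessel V Λ v A B h) f
  have e : ∀ i, ContinuousLinearMap.adjoint ((v i : ℂ) • (Λ i).comp (projL (V i)))
      (((v i : ℂ) • (Λ i).comp (projL (V i))) f) = ((v i) ^ 2 : ℝ) •
      projL (V i) (ContinuousLinearMap.adjoint (Λ i) (Λ i (projL (V i) f))) := fun i => by
    refine ext_inner_right ℂ fun y => ?_
    rw [ContinuousLinearMap.adjoint_inner_left, ← Complex.coe_smul, inner_smul_left,
      aux_proj_inner, ContinuousLinearMap.adjoint_inner_left]
    simp only [_root_.smul_apply, ContinuousLinearMap.comp_apply, inner_smul_left,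
      inner_smul_right, Complex.conj_ofReal]
    push_cast
    ring
  have h1 : HasSum (fun i => ContinuousLinearMap.adjoint ((v i : ℂ) • (Λ i).comp (projL (V i)))
      (((v i : ℂ) • (Λ i).comp (projL (V i))) f)) (S f) := by
    have := hs.hasSum
    rw [tsum_congr e, ← hS f] at this
    exact this
  have h2 := aux_inner_hasSum h1 f'
  simpa only [ContinuousLinearMap.adjoint_inner_left] using h2

lemma aux_prod_hasSum {ι κ : Type*} {a : ι → ℂ} {b : κ → ℂ} {s t : ℂ} (h1 : HasSum a s)
    (h2 : HasSum b t) : HasSum (fun p : ι × κ => a p.1 * b p.2) (s * t) :=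
  h1.mul h2 (summable_mul_of_summable_norm h1.summable.norm h2.summable.norm)

/-- the g-fusion frame operator of the canonical dual g-fusion frame
`Θ` of `Λ ⊗ Γ` is `S_{Λ⊗Γ}⁻¹`. -/
theorem stmt_15 {ι κ : Type*} [CompleteSpace H] [CompleteSpace K] [CompleteSpace E]
    {Hi : ι → Type*} [∀ i, NormedAddCommGroup (Hi i)] [∀ i, InnerProductSpace ℂ (Hi i)]
    [∀ i, CompleteSpace (Hi i)]
    {Kj : κ → Type*} [∀ j, NormedAddCommGroup (Kj j)] [∀ j, InnerProductSpace ℂ (Kj j)]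
    [∀ j, CompleteSpace (Kj j)]
    {Eij : ι → κ → Type*} [∀ i j, NormedAddCommGroup (Eij i j)]
    [∀ i j, InnerProductSpace ℂ (Eij i j)] [∀ i j, CompleteSpace (Eij i j)]
    (tp : HilbertTensor H K E) (tpij : ∀ i j, HilbertTensor (Hi i) (Kj j) (Eij i j))
    (V : ι → Submodule ℂ H) [∀ i, HasOrthogonalProjection (V i)]
    (W : κ → Submodule ℂ K) [∀ j, HasOrthogonalProjection (W j)]
    [∀ i j, HasOrthogonalProjection (tsub tp (V i) (W j))]
    (Λ : ∀ i, H →L[ℂ] Hi i) (Γ : ∀ j, K →L[ℂ] Kj j)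
    (v : ι → ℝ) (w : κ → ℝ) (A B C D : ℝ)
    (hΛ : IsGFusionFrame V Λ v A B) (hΓ : IsGFusionFrame W Γ w C D)
    (Rij : ∀ i j, E →L[ℂ] Eij i j)
    (hRij : ∀ i j, IsTensorOp tp (tpij i j) (Λ i) (Γ j) (Rij i j))
    (SΛ : H →L[ℂ] H) (SΓ : K →L[ℂ] K)
    (hSΛ : ∀ f : H, SΛ f = ∑' i, ((v i) ^ 2 : ℝ) •
      projL (V i) (ContinuousLinearMap.adjoint (Λ i) (Λ i (projL (V i) f))))
    (hSΓ : ∀ g : K, SΓ g = ∑' j, ((w j) ^ 2 : ℝ) •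
      projL (W j) (ContinuousLinearMap.adjoint (Γ j) (Γ j (projL (W j) g))))
    (S Si : E →L[ℂ] E)
    (hS : IsTensorOp tp tp SΛ SΓ S)
    (hS1 : S.comp Si = ContinuousLinearMap.id ℂ E)
    (hS2 : Si.comp S = ContinuousLinearMap.id ℂ E)
    [∀ i j, HasOrthogonalProjection ((tsub tp (V i) (W j)).map Si.toLinearMap)] :
    ∀ (f : H) (g : K),
      (∑' p : ι × κ, ((v p.1 * w p.2) ^ 2 : ℝ) •
        projL ((tsub tp (V p.1) (W p.2)).map Si.toLinearMap)
          (ContinuousLinearMap.adjoint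
              ((Rij p.1 p.2).comp ((projL (tsub tp (V p.1) (W p.2))).comp Si))
            (((Rij p.1 p.2).comp ((projL (tsub tp (V p.1) (W p.2))).comp Si))
              (projL ((tsub tp (V p.1) (W p.2)).map Si.toLinearMap) (tp.tmul f g))))) =
      Si (tp.tmul f g) := by
  let L : ∀ i, H →L[ℂ] Hi i := fun i => (v i : ℂ) • (Λ i).comp (projL (V i))
  let M : ∀ j, K →L[ℂ] Kj j := fun j => (w j : ℂ) • (Γ j).comp (projL (W j))
  let N : ∀ p : ι × κ, E →L[ℂ] Eij p.1 p.2 := fun p =>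
    ((v p.1 * w p.2 : ℝ) : ℂ) • (Rij p.1 p.2).comp (projL (tsub tp (V p.1) (W p.2)))
  have hN : ∀ p f g f' g', ⟪N p (tp.tmul f g), N p (tp.tmul f' g')⟫ =
      ⟪L p.1 f, L p.1 f'⟫ * ⟪M p.2 g, M p.2 g'⟫ := by
    intro p f g f' g'
    simp only [N, L, M, _root_.smul_apply, ContinuousLinearMap.comp_apply,
      aux_proj_tensor, hRij p.1 p.2 _ _, inner_smul_left, inner_smul_right,
      (tpij p.1 p.2).inner_tmul, Complex.conj_ofReal]
    push_cast
    ring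
  have hNB := aux_tensor_bessel tp L M N B D (hΛ.2.1.le.trans hΛ.2.2.1)
    (aux_frame_bessel V Λ v A B hΛ) (aux_frame_bessel W Γ w C D hΓ) hN
  have hsum := aux_summable N (B * D) hNB
  have hsum2 : ∀ x y : E, HasSum (fun p => ⟪N p x, N p y⟫)
      ⟪∑' p, ContinuousLinearMap.adjoint (N p) (N p x), y⟫ := by
    intro x y
    have h3 := aux_inner_hasSum (hsum x).hasSum y
    simpa only [ContinuousLinearMap.adjoint_inner_left] using h3
  have hel : ∀ f g, S (tp.tmul f g) =
      ∑' p, ContinuousLinearMap.adjoint (N p) (N p (tp.tmul f g)) := by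
    intro f g
    refine aux_ext_tensor tp fun f' g' => ?_
    have h1 := hsum2 (tp.tmul f g) (tp.tmul f' g')
    simp only [hN] at h1
    have a1 : HasSum (fun i => ⟪L i f, L i f'⟫) ⟪SΛ f, f'⟫ := aux_op_hasSum V Λ v A B hΛ SΛ hSΛ f f'
    have a2 : HasSum (fun i => ⟪M i g, M i g'⟫) ⟪SΓ g, g'⟫ := aux_op_hasSum W Γ w C D hΓ SΓ hSΓ g g'
    have h2 := aux_prod_hasSum a1 a2
    rw [hS f g, tp.inner_tmul]
    exact h2.unique h1
  have hSsymm : ContinuousLinearMap.adjoint S = S := by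
    refine ContinuousLinearMap.ext_on tp.dense_span ?_
    rintro _ ⟨⟨f, g⟩, rfl⟩
    refine aux_ext_tensor tp fun f' g' => ?_
    rw [ContinuousLinearMap.adjoint_inner_left]
    simp only [hel]
    have h1 := hsum2 (tp.tmul f g) (tp.tmul f' g')
    have h2 := aux_conj (hsum2 (tp.tmul f' g') (tp.tmul f g))
    simp only [inner_conj_symm] at h2
    exact h2.unique h1
  have hall : ∀ x, S x = ∑' p, ContinuousLinearMap.adjoint (N p) (N p x) := by
    intro x
    refine aux_ext_tensor tp fun f' g' => ?_
    rw [← ContinuousLinearMap.adjoint_inner_right, hSsymm, hel]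
    have h1 := hsum2 x (tp.tmul f' g')
    have h2 := aux_conj (hsum2 (tp.tmul f' g') x)
    simp only [inner_conj_symm] at h2
    exact h2.unique h1
  have hSi1 : ∀ x, S (Si x) = x := fun x => DFunLike.congr_fun hS1 x
  have hSi : ∀ x y, ⟪Si x, y⟫ = ⟪x, Si y⟫ := by
    intro x y
    conv_lhs => rw [← hSi1 y, ← ContinuousLinearMap.adjoint_inner_left, hSsymm, hSi1]
  intro f g
  have hfin := Si.hasSum (hsum (Si (tp.tmul f g))).hasSum
  rw [← hall, hSi1] at hfin
  rw [← hfin.tsum_eq]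
  refine tsum_congr fun p => ?_
  have key : ∀ x, projL (tsub tp (V p.1) (W p.2))
      (Si (projL ((tsub tp (V p.1) (W p.2)).map Si.toLinearMap) x)) =
      projL (tsub tp (V p.1) (W p.2)) (Si x) := by
    intro x
    refine ext_inner_right ℂ fun y => ?_
    rw [aux_proj_inner, aux_proj_inner, hSi, hSi, aux_proj_inner]
    congr 1
    exact Submodule.starProjection_eq_self_iff.2
      (Submodule.mem_map_of_mem (Submodule.starProjection_apply_mem _ _))
  refine ext_inner_right ℂ fun y => ?_
  rw [← Complex.coe_smul, inner_smul_left, aux_proj_inner,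
    ContinuousLinearMap.adjoint_inner_left, hSi, ContinuousLinearMap.adjoint_inner_left]
  simp only [N, ContinuousLinearMap.comp_apply, key, _root_.smul_apply,
    inner_smul_left, inner_smul_right, Complex.conj_ofReal]
  push_cast
  ring
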